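/- arXiv:1512.00577 — 8 statements merged into one kernel-verified Lean document; each statement's English description precedes it below -/
import Mathlib

section
/- For f, g ∈ ℤ^{m+n}, one has g ⪯_b f if and only if wt^1_b(g) = wt^1_b(f) and wt^j_b(g) ≤ wt^j_b(f) in P for every j ∈ {1,…,m+n}. -/
/-!
The argument compares an element `x` of `P` with its partial sums `C_a(x) = ∑_{r ≤ a} x_r`, `a ∈ ℤ`.
They satisfy `C_a(wt^j_b(f)) = ♯_b(f,a,j)` (`cumul_wt`), they determine `x` (`cumul_injective`), and
`C_a(ε_r − ε_{r+1})` is `1` if `a = r` and `0` otherwise (`cumul_simple`). If the coordinates of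
`x` sum to zero, then `C_a(x)` vanishes for all but finitely many `a`, and
`x = ∑_a C_a(x) (ε_a − ε_{a+1})`. Hence `0 ≤ x` in `P` if and only if all partial sums are
nonnegative and the coordinate sum is zero (`mem_cone_iff`). The coordinate sum of `wt^j_b(f)` is
`∑_{i ≥ j} (−1)^{b_i}`, which does not depend on `f`, so it always cancels in
`wt^j_b(f) − wt^j_b(g)`.
-/

open Finset

/-- The sign `(−1)^{b_i}`. -/
def sgn {N : ℕ} (b : Fin N → Bool) (i : Fin N) : ℤ := if b i then -1 else 1

/-- `b` is a `0^m 1^n`-sequence: exactly `m` entries equal to `0` (false)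
and `n` entries equal to `1` (true). -/
def IsZeroOneSeq (m n : ℕ) (b : Fin (m + n) → Bool) : Prop :=
  (Finset.univ.filter (fun i => b i = false)).card = m ∧
  (Finset.univ.filter (fun i => b i = true)).card = n

/-- `♯_b(f,a,j) = Σ_{i ≥ j, f(i) ≤ a} (−1)^{b_i}` (0-indexed: `j = 0` corresponds to `j = 1`
in the 1-indexed convention). -/
def sharp {N : ℕ} (b : Fin N → Bool) (f : Fin N → ℤ) (a : ℤ) (j : ℕ) : ℤ :=
  ∑ i ∈ Finset.univ.filter (fun i : Fin N => j ≤ i.val ∧ f i ≤ a), sgn b i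

/-- The Bruhat order `g ⪯_b f`. -/
def bruhatLE {N : ℕ} (b : Fin N → Bool) (g f : Fin N → ℤ) : Prop :=
  (∀ (a : ℤ) (j : ℕ), sharp b g a j ≤ sharp b f a j) ∧
  (∀ a : ℤ, sharp b g a 0 = sharp b f a 0)

/-- The partial order on the free abelian group `P = ⊕_{a ∈ ℤ} ℤ ε_a`:
`ν ≤ μ` iff `μ − ν` is a `ℤ≥0`-linear combination of the elements `ε_r − ε_{r+1}`. -/
def PLe (ν μ : ℤ →₀ ℤ) : Prop :=
  μ - ν ∈ AddSubmonoid.closure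
    {x : ℤ →₀ ℤ | ∃ r : ℤ, x = Finsupp.single r 1 - Finsupp.single (r + 1) 1}

/-- `wt^j_b(f) = Σ_{i ≥ j} (−1)^{b_i} ε_{f(i)} ∈ P` (0-indexed `j`). -/
noncomputable def wt {N : ℕ} (b : Fin N → Bool) (f : Fin N → ℤ) (j : ℕ) : ℤ →₀ ℤ :=
  ∑ i ∈ Finset.univ.filter (fun i : Fin N => j ≤ i.val), sgn b i • Finsupp.single (f i) (1 : ℤ)

/-- The partial sum `C_a(x) = ∑_{r ≤ a} x_r`, as an additive map. -/
noncomputable def cumul (a : ℤ) : (ℤ →₀ ℤ) →+ ℤ :=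
  Finsupp.liftAddHom fun r => if r ≤ a then AddMonoidHom.id ℤ else 0

/-- The sum of all coordinates, as an additive map. -/
noncomputable def total : (ℤ →₀ ℤ) →+ ℤ :=
  Finsupp.liftAddHom fun _ => AddMonoidHom.id ℤ

lemma cumul_single (a r c : ℤ) : cumul a (Finsupp.single r c) = if r ≤ a then c else 0 := by
  unfold cumul
  rw [Finsupp.liftAddHom_apply_single]
  split_ifs <;> rfl

lemma total_single (r c : ℤ) : total (Finsupp.single r c) = c := by
  unfold total
  rw [Finsupp.liftAddHom_apply_single]
  rfl

lemma cumul_simple (a r : ℤ) :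
    cumul a (Finsupp.single r 1 - Finsupp.single (r + 1) 1) = if a = r then 1 else 0 := by
  rw [map_sub, cumul_single, cumul_single]
  split_ifs <;> omega

lemma cumul_sub_cumul_pred (a : ℤ) (x : ℤ →₀ ℤ) : cumul a x - cumul (a - 1) x = x a := by
  induction x using Finsupp.induction_linear with
  | zero => simp
  | add x y hx hy => rw [map_add, map_add, Finsupp.add_apply, ← hx, ← hy]; ring
  | single r c =>
    rw [cumul_single, cumul_single, Finsupp.single_apply]
    split_ifs <;> omega

lemma cumul_injective {x y : ℤ →₀ ℤ} (h : ∀ a, cumul a x = cumul a y) : x = y := by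
  ext a
  rw [← cumul_sub_cumul_pred, ← cumul_sub_cumul_pred, h, h]

/-- Far to the left no coordinate is counted, and far to the right all of them are. -/
lemma exists_cumul_bounds (x : ℤ →₀ ℤ) :
    ∃ L U : ℤ, (∀ a < L, cumul a x = 0) ∧ ∀ a ≥ U, cumul a x = total x := by
  induction x using Finsupp.induction_linear with
  | zero => exact ⟨0, 0, by simp, by simp⟩
  | add x y hx hy =>
    obtain ⟨L, U, h1, h2⟩ := hx
    obtain ⟨L', U', h1', h2'⟩ := hy
    refine ⟨min L L', max U U', fun a ha => ?_, fun a ha => ?_⟩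
    · rw [map_add, h1 a (by omega), h1' a (by omega), add_zero]
    · rw [map_add, map_add, h2 a (by omega), h2' a (by omega)]
  | single r c =>
    refine ⟨r, r, fun a ha => ?_, fun a ha => ?_⟩
    · rw [cumul_single, if_neg (by omega)]
    · rw [cumul_single, total_single, if_pos (by omega)]

/-- The positive cone of `P` consists of the elements with nonnegative partial sums and zero
coordinate sum. -/
lemma mem_cone_iff (x : ℤ →₀ ℤ) :
    x ∈ AddSubmonoid.closure
      {x : ℤ →₀ ℤ | ∃ r : ℤ, x = Finsupp.single r 1 - Finsupp.single (r + 1) 1} ↔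
    (∀ a, 0 ≤ cumul a x) ∧ total x = 0 := by
  constructor
  · intro hx
    induction hx using AddSubmonoid.closure_induction with
    | mem x hx =>
      obtain ⟨r, rfl⟩ := hx
      refine ⟨fun a => ?_, ?_⟩
      · rw [cumul_simple]; split_ifs <;> norm_num
      · rw [map_sub, total_single, total_single, sub_self]
    | zero => simp
    | add x y _ _ hx hy =>
      refine ⟨fun a => ?_, ?_⟩
      · rw [map_add]; exact add_nonneg (hx.1 a) (hy.1 a)
      · rw [map_add, hx.2, hy.2, add_zero]
  · rintro ⟨hpos, htot⟩
    obtain ⟨L, U, hL, hU⟩ := exists_cumul_bounds x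
    have key : x = ∑ r ∈ Finset.Ico L U,
        (cumul r x).toNat • (Finsupp.single r 1 - Finsupp.single (r + 1) 1 : ℤ →₀ ℤ) := by
      apply cumul_injective
      intro a
      rw [map_sum]
      simp only [map_nsmul, cumul_simple, smul_ite, smul_zero, Finset.sum_ite_eq, nsmul_one,
        Int.toNat_of_nonneg (hpos _)]
      split_ifs with ha
      · rfl
      · rw [Finset.mem_Ico] at ha
        rcases lt_or_ge a L with h | h
        · exact hL a h
        · rw [hU a (by omega), htot]
    rw [key]
    refine sum_mem fun r _ => nsmul_mem (AddSubmonoid.subset_closure ?_) _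
    exact ⟨r, rfl⟩

lemma cumul_wt {N : ℕ} (b : Fin N → Bool) (f : Fin N → ℤ) (a : ℤ) (j : ℕ) :
    cumul a (wt b f j) = sharp b f a j := by
  unfold wt sharp
  rw [map_sum, ← Finset.filter_filter, Finset.sum_filter (fun i => f i ≤ a)]
  refine Finset.sum_congr rfl fun i _ => ?_
  rw [map_zsmul, cumul_single]
  split_ifs <;> simp

lemma total_wt {N : ℕ} (b : Fin N → Bool) (f : Fin N → ℤ) (j : ℕ) :
    total (wt b f j) = ∑ i ∈ Finset.univ.filter (fun i : Fin N => j ≤ i.val), sgn b i := by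
  unfold wt
  rw [map_sum]
  refine Finset.sum_congr rfl fun i _ => ?_
  rw [map_zsmul, total_single, smul_eq_mul, mul_one]

lemma PLe_wt_iff {N : ℕ} (b : Fin N → Bool) (f g : Fin N → ℤ) (j : ℕ) :
    PLe (wt b g j) (wt b f j) ↔ ∀ a, sharp b g a j ≤ sharp b f a j := by
  unfold PLe
  rw [mem_cone_iff]
  simp only [map_sub, cumul_wt, total_wt, sub_self, and_true, sub_nonneg]

/-- `g ⪯_b f` iff `wt^1_b(g) = wt^1_b(f)` and `wt^j_b(g) ≤ wt^j_b(f)` in `P` for every `j`. -/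
theorem bruhatLE_iff_wt (m n : ℕ) (b : Fin (m + n) → Bool) (hb : IsZeroOneSeq m n b)
    (f g : Fin (m + n) → ℤ) :
    bruhatLE b g f ↔ (wt b g 0 = wt b f 0 ∧ ∀ j : ℕ, PLe (wt b g j) (wt b f j)) := by
  have h0 : wt b g 0 = wt b f 0 ↔ ∀ a, sharp b g a 0 = sharp b f a 0 := by
    simp only [← cumul_wt]
    exact ⟨fun h a => by rw [h], cumul_injective⟩
  unfold bruhatLE
  simp only [PLe_wt_iff]
  rw [h0, forall_comm, and_comm]
end

section
/- The relation ⪯_b is a partial order on ℤ^{m+n}: it is reflexive, transitive, and antisymmetric (if g ⪯_b f and f ⪯_b g then f = g). -/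
/-!
Reflexivity and transitivity are inherited from `≤` and `=` on `ℤ`. For antisymmetry, mutual
comparability makes `♯_b(f, a, j)` and `♯_b(g, a, j)` agree for all `a` and `j`. The difference
`♯_b(f, a, j) - ♯_b(f, a, j + 1)` is `±1` if `f j ≤ a` and `0` otherwise, so `f j ≤ a ↔ g j ≤ a`
for every `a`, whence `f j = g j`.
-/

open Finset

/-- Splitting off the smallest index: consecutive values of `♯_b` in `j` differ by the
contribution of the single entry `f i`, so `♯_b` detects whether `f i ≤ a`. -/
lemma sharp_eq_add_sharp_succ {N : ℕ} (b : Fin N → Bool) (f : Fin N → ℤ) (a : ℤ) (i : Fin N) :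
    sharp b f a i.val = (if f i ≤ a then sgn b i else 0) + sharp b f a (i.val + 1) := by
  unfold sharp
  rw [Finset.sum_filter, Finset.sum_filter, ← Finset.add_sum_erase _ _ (Finset.mem_univ i),
    ← Finset.add_sum_erase (a := i) _ (fun k : Fin N => if i.val + 1 ≤ k.val ∧ f k ≤ a
      then sgn b k else 0) (Finset.mem_univ i)]
  have h : ∑ k ∈ Finset.univ.erase i, (if i.val ≤ k.val ∧ f k ≤ a then sgn b k else 0) =
      ∑ k ∈ Finset.univ.erase i, (if i.val + 1 ≤ k.val ∧ f k ≤ a then sgn b k else 0) := by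
    refine Finset.sum_congr rfl fun k hk => ?_
    have hne : k.val ≠ i.val := fun h => (Finset.mem_erase.mp hk).1 (Fin.ext h)
    have : i.val ≤ k.val ↔ i.val + 1 ≤ k.val := by omega
    simp only [this]
  rw [h]
  simp

lemma sgn_ne_zero {N : ℕ} (b : Fin N → Bool) (i : Fin N) : sgn b i ≠ 0 := by
  unfold sgn
  split_ifs <;> norm_num

/-- The function `♯_b(f, ·, ·)` determines `f`. -/
lemma eq_of_sharp_eq {N : ℕ} (b : Fin N → Bool) (f g : Fin N → ℤ)
    (h : ∀ (a : ℤ) (j : ℕ), sharp b f a j = sharp b g a j) : f = g := by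
  funext i
  have key : ∀ a : ℤ, f i ≤ a ↔ g i ≤ a := by
    intro a
    have h1 := h a i.val
    rw [sharp_eq_add_sharp_succ, sharp_eq_add_sharp_succ, h a (i.val + 1)] at h1
    have h2 := add_right_cancel h1
    have h3 := sgn_ne_zero b i
    split_ifs at h2 <;> tauto
  exact le_antisymm ((key _).mpr le_rfl) ((key _).mp le_rfl)

/-- The Bruhat order `⪯_b` is reflexive, transitive and antisymmetric. -/
theorem bruhatLE_isPartialOrder (m n : ℕ) (b : Fin (m + n) → Bool) (hb : IsZeroOneSeq m n b) :
    (∀ f : Fin (m + n) → ℤ, bruhatLE b f f) ∧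
    (∀ f g h : Fin (m + n) → ℤ, bruhatLE b f g → bruhatLE b g h → bruhatLE b f h) ∧
    (∀ f g : Fin (m + n) → ℤ, bruhatLE b g f → bruhatLE b f g → f = g) := by
  refine ⟨fun f => ⟨fun _ _ => le_rfl, fun _ => rfl⟩, fun f g h hfg hgh => ?_,
    fun f g hgf hfg => ?_⟩
  · exact ⟨fun a j => (hfg.1 a j).trans (hgh.1 a j), fun a => (hfg.2 a).trans (hgh.2 a)⟩
  · exact eq_of_sharp_eq b f g fun a j => le_antisymm (hfg.1 a j) (hgf.1 a j)
end

section
/- Let i ∈ {1,…,m+n−1} with b_i = b_{i+1}, and let g ∈ ℤ^{m+n}. Then g ⪯_b g·s_i if and only if (−1)^{b_i} g(i) ≤ (−1)^{b_i} g(i+1), and g·s_i ⪯_b g if and only if (−1)^{b_i} g(i) ≥ (−1)^{b_i} g(i+1); in particular g = g·s_i if and only if g(i) = g(i+1). -/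
/-!
Passing from `g` to `g·s_i` only exchanges the values at the adjacent positions `i` and `i+1`.
These carry the same sign, so a tail sum `♯_b(·,a,j)` is unaffected unless the tail starts
exactly at `i+1`, where the value `g(i+1)` is replaced by `g(i)` (`sharp_swap`). Hence both
comparisons amount to a comparison, for all `a`, of the indicators of `g(i) ≤ a` and
`g(i+1) ≤ a`, multiplied by the sign `(−1)^{b_i}`; testing with `a = g(i)` and `a = g(i+1)`
gives the inequality between the values.
-/

open Finset

/-- Swapping two adjacent values with equal signs changes `♯_b(g,a,j)` only at `j = i+1`. -/
theorem sharp_swap {N : ℕ} (b : Fin N → Bool) (i0 i1 : Fin N) (hii : i1.val = i0.val + 1)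
    (hbi : b i0 = b i1) (g : Fin N → ℤ) (a : ℤ) (j : ℕ) :
    sharp b (g ∘ ⇑(Equiv.swap i0 i1)) a j = sharp b g a j +
      if j = i1.val then
        sgn b i0 * ((if g i0 ≤ a then 1 else 0) - (if g i1 ≤ a then 1 else 0))
      else 0 := by
  have hne : i1 ≠ i0 := fun h => by simp [h] at hii
  have hs : sgn b i1 = sgn b i0 := by simp [sgn, hbi]
  have hmem : i1 ∈ univ.erase i0 := by simp [hne]
  -- Away from the two positions the summands agree.
  have hrest : ∀ x ∈ (univ.erase i0).erase i1,
      (if j ≤ x.val ∧ (g ∘ ⇑(Equiv.swap i0 i1)) x ≤ a then sgn b x else 0) =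
        if j ≤ x.val ∧ g x ≤ a then sgn b x else 0 := by
    intro x hx
    simp only [mem_erase, mem_univ, and_true] at hx
    simp [Equiv.swap_apply_of_ne_of_ne hx.2 hx.1]
  unfold sharp
  rw [sum_filter, sum_filter, ← add_sum_erase _ _ (mem_univ i0), ← add_sum_erase _ _ hmem,
    ← add_sum_erase _ _ (mem_univ i0), ← add_sum_erase _ _ hmem, sum_congr rfl hrest]
  simp only [Function.comp, Equiv.swap_apply_left, Equiv.swap_apply_right, hs]
  split_ifs <;> omega

/-- The pointwise form of the comparison: the signed indicators of `x ≤ a` and `y ≤ a` compare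
for all `a` exactly when the signed values compare in the opposite direction. -/
theorem sgn_mul_indicator_le_iff {N : ℕ} (b : Fin N → Bool) (i : Fin N) (x y : ℤ) :
    (∀ a : ℤ, 0 ≤ sgn b i * ((if x ≤ a then 1 else 0) - (if y ≤ a then 1 else 0))) ↔
      sgn b i * x ≤ sgn b i * y := by
  unfold sgn
  constructor
  · intro h
    have hx := h x
    have hy := h y
    split_ifs at * <;> omega
  · intro h a
    split_ifs at * <;> omega

/-- Comparison of `g` and `g·s_i` for an interior index `i` (with `b_i = b_{i+1}`):
`g ⪯_b g·s_i` iff `(−1)^{b_i} g(i) ≤ (−1)^{b_i} g(i+1)`, `g·s_i ⪯_b g` iff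
`(−1)^{b_i} g(i) ≥ (−1)^{b_i} g(i+1)`, and `g = g·s_i` iff `g(i) = g(i+1)`. -/
theorem bruhatLE_swap (m n : ℕ) (b : Fin (m + n) → Bool) (hb : IsZeroOneSeq m n b)
    (i0 i1 : Fin (m + n)) (hii : i1.val = i0.val + 1) (hbi : b i0 = b i1)
    (g : Fin (m + n) → ℤ) :
    (bruhatLE b g (g ∘ ⇑(Equiv.swap i0 i1)) ↔ sgn b i0 * g i0 ≤ sgn b i0 * g i1) ∧
    (bruhatLE b (g ∘ ⇑(Equiv.swap i0 i1)) g ↔ sgn b i0 * g i1 ≤ sgn b i0 * g i0) ∧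
    (g = g ∘ ⇑(Equiv.swap i0 i1) ↔ g i0 = g i1) := by
  have key := sharp_swap b i0 i1 hii hbi g
  -- The tail starting at the first position never starts at `i1`.
  have h0 : ∀ a, sharp b (g ∘ ⇑(Equiv.swap i0 i1)) a 0 = sharp b g a 0 := by
    intro a
    rw [key, if_neg (by omega), add_zero]
  refine ⟨?_, ?_, ?_⟩
  · rw [← sgn_mul_indicator_le_iff]
    constructor
    · intro h a
      have := h.1 a i1.val
      rw [key, if_pos rfl] at this
      linarith
    · intro h
      refine ⟨fun a j => ?_, fun a => (h0 a).symm⟩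
      have := h a
      rw [key]
      split_ifs at * <;> linarith
  · rw [← sgn_mul_indicator_le_iff]
    constructor
    · intro h a
      have := h.1 a i1.val
      rw [key, if_pos rfl] at this
      linarith
    · intro h
      refine ⟨fun a j => ?_, h0⟩
      have := h a
      rw [key]
      split_ifs at * <;> linarith
  · constructor
    · intro h
      simpa using congrFun h i0
    · intro h
      funext x
      simp only [Function.comp, Equiv.swap_apply_def]
      split_ifs with hx hx' <;> simp [*]
end

section
/- Let f ∈ ℤ^{m+n} satisfy, for every block I_k, the weak-dominance condition (−1)^{b_{r_k}} f(r_{k−1}+1) ≥ (−1)^{b_{r_k}} f(r_{k−1}+2) ≥ ⋯ ≥ (−1)^{b_{r_k}} f(r_k). If g ∈ ℤ^{m+n} satisfies g ⪯_b f, then g·x ⪯_b f for every x ∈ 𝔖^b. -/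
/-!
Fix `a` and let `w h i` be the contribution of position `i` to `♯_b(h, a, ·)`, so that
`♯_b(h, a, s) - ♯_b(h, a, j)` is the sum of `w h` over `[s, j)`.

Since `x` preserves the blocks and `b` is constant on them, `♯_b(g·x, a, ·)` and `♯_b(g, a, ·)`
agree at block boundaries (`sharp_comp_boundary`), so the required inequality holds there by
hypothesis. Inside a block `[s, t)` weak dominance makes `{i | f i ≤ a}` a final segment (sign `+1`)
or an initial segment (sign `-1`) of the block. Hence, for each `j` in the block, either `w f` takes
its largest possible values on all of `[j, t)`, or its smallest possible values on all of `[s, j)`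
(`weight_compare`). In the first case the inequality at `t` propagates down to `j`, in the second
case the inequality at `s` propagates up to `j`.
-/

open Finset

/-- Block decomposition data: `0 = r 0 < r 1 < ⋯ < r d = N`, `b` is constant on each block
`I_k = {r (k-1), …, r k − 1}` (0-indexed), and `b` changes value at each block boundary. -/
def BlockData (N : ℕ) (b : Fin N → Bool) (d : ℕ) (r : ℕ → ℕ) : Prop :=
  r 0 = 0 ∧ r d = N ∧ (∀ k < d, r k < r (k + 1)) ∧
  (∀ k < d, ∀ i j : Fin N,
    r k ≤ i.val → i.val < r (k + 1) → r k ≤ j.val → j.val < r (k + 1) → b i = b j) ∧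
  (∀ k, 0 < k → k < d → ∀ (h1 : r k - 1 < N) (h2 : r k < N), b ⟨r k - 1, h1⟩ ≠ b ⟨r k, h2⟩)

/-- Membership in `𝔖^b`: the permutation `x` preserves each block `I_k`. -/
def BlockPerm (N : ℕ) (d : ℕ) (r : ℕ → ℕ) (x : Equiv.Perm (Fin N)) : Prop :=
  ∀ k < d, ∀ i : Fin N, r k ≤ i.val → i.val < r (k + 1) →
    r k ≤ (x i).val ∧ (x i).val < r (k + 1)

/-- Weak dominance on every block: `(−1)^{b_i} f(i) ≥ (−1)^{b_i} f(j)` for `i ≤ j`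
in the same block. -/
def WeaklyDominant {N : ℕ} (b : Fin N → Bool) (d : ℕ) (r : ℕ → ℕ) (f : Fin N → ℤ) : Prop :=
  ∀ k < d, ∀ i j : Fin N, r k ≤ i.val → i.val ≤ j.val → j.val < r (k + 1) →
    sgn b i * f j ≤ sgn b i * f i

/-- The contribution of position `i` to `♯_b(f, a, ·)`. -/
def weight {N : ℕ} (b : Fin N → Bool) (f : Fin N → ℤ) (a : ℤ) (i : Fin N) : ℤ :=
  if f i ≤ a then sgn b i else 0

lemma sharp_eq_sum_weight {N : ℕ} (b : Fin N → Bool) (f : Fin N → ℤ) (a : ℤ) (j : ℕ) :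
    sharp b f a j = ∑ i : Fin N, if j ≤ i.val then weight b f a i else 0 := by
  unfold sharp weight
  rw [Finset.sum_filter]
  refine Finset.sum_congr rfl fun i _ => ?_
  by_cases h1 : j ≤ i.val <;> by_cases h2 : f i ≤ a <;> simp [h1, h2]

lemma sharp_split {N : ℕ} (b : Fin N → Bool) (f : Fin N → ℤ) (a : ℤ) {s j : ℕ} (h : s ≤ j) :
    sharp b f a s = sharp b f a j +
      ∑ i ∈ Finset.univ.filter (fun i : Fin N => s ≤ i.val ∧ i.val < j), weight b f a i := by
  rw [sharp_eq_sum_weight, sharp_eq_sum_weight, Finset.sum_filter, ← Finset.sum_add_distrib]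
  refine Finset.sum_congr rfl fun i _ => ?_
  by_cases h1 : s ≤ i.val <;> by_cases h2 : j ≤ i.val
  · simp [h1, h2]
  · simp [h1, h2, not_le.mp h2]
  · omega
  · simp [h1, h2]

lemma boundary_mono {d : ℕ} {r : ℕ → ℕ} (hr : ∀ k < d, r k < r (k + 1)) {k l : ℕ}
    (hkl : k ≤ l) (hl : l ≤ d) : r k ≤ r l := by
  induction l, hkl using Nat.le_induction with
  | base => exact le_rfl
  | succ l hkl ih => exact (ih (by omega)).trans (hr l (by omega)).le

lemma exists_block {r : ℕ → ℕ} (h0 : r 0 = 0) {d i : ℕ} (hi : i < r d) :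
    ∃ k < d, r k ≤ i ∧ i < r (k + 1) := by
  induction d with
  | zero => omega
  | succ d ih =>
    by_cases h : i < r d
    · obtain ⟨k, hk, h'⟩ := ih h
      exact ⟨k, by omega, h'⟩
    · exact ⟨d, by omega, by omega, hi⟩

/-- A block permutation does not change `♯_b` at a block boundary. -/
lemma sharp_comp_boundary {N d : ℕ} {b : Fin N → Bool} {r : ℕ → ℕ} (hblock : BlockData N b d r)
    {x : Equiv.Perm (Fin N)} (hx : BlockPerm N d r x) (g : Fin N → ℤ) (a : ℤ) {k : ℕ}
    (hk : k ≤ d) : sharp b (g ∘ x) a (r k) = sharp b g a (r k) := by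
  obtain ⟨h0, hd, hr, hconst, -⟩ := hblock
  rw [sharp_eq_sum_weight, sharp_eq_sum_weight,
    ← Equiv.sum_comp x (fun i => if r k ≤ i.val then weight b g a i else 0)]
  refine Finset.sum_congr rfl fun i _ => ?_
  obtain ⟨l, hl, hl1, hl2⟩ := exists_block h0 (d := d) (i := i.val) (by omega)
  obtain ⟨hx1, hx2⟩ := hx l hl i hl1 hl2
  have hb : b (x i) = b i := hconst l hl _ _ hx1 hx2 hl1 hl2
  have hiff : r k ≤ i.val ↔ r k ≤ (x i).val := by
    rcases Nat.lt_or_ge l k with h | h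
    · have := boundary_mono hr (show l + 1 ≤ k from h) hk
      omega
    · have := boundary_mono hr h hl.le
      omega
  simp only [weight, sgn, Function.comp_apply, hb, hiff]

/-- Inside a block, a weakly dominant `f` has maximal weights from `j` to the end of the block, or
minimal weights from the start of the block up to `j`; here `h` is any competitor. -/
lemma weight_compare {N d : ℕ} {b : Fin N → Bool} {r : ℕ → ℕ} (hblock : BlockData N b d r)
    {f : Fin N → ℤ} (hf : WeaklyDominant b d r f) (h : Fin N → ℤ) (a : ℤ) {k : ℕ} (hk : k < d)
    (j : Fin N) (hj1 : r k ≤ j.val) (hj2 : j.val < r (k + 1)) :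
    (∀ i : Fin N, j.val ≤ i.val → i.val < r (k + 1) → weight b h a i ≤ weight b f a i) ∨
    (∀ i : Fin N, r k ≤ i.val → i.val < j.val → weight b f a i ≤ weight b h a i) := by
  obtain ⟨-, -, -, hconst, -⟩ := hblock
  by_cases hcase : (b j = false ↔ f j ≤ a)
  · left
    intro i hi1 hi2
    have hb : b i = b j := hconst k hk i j (hj1.trans hi1) hi2 hj1 hj2
    have hd := hf k hk j i hj1 hi1 hi2
    unfold sgn at hd
    unfold weight sgn
    rw [hb]
    cases hbj : b j <;> simp only [hbj] at hd hcase ⊢ <;> grind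
  · right
    intro i hi1 hi2
    have hb : b i = b j := hconst k hk i j hi1 (hi2.trans hj2) hj1 hj2
    have hd := hf k hk i j hi1 hi2.le hj2
    unfold sgn at hd
    unfold weight sgn
    rw [hb] at hd ⊢
    cases hbj : b j <;> simp only [hbj] at hd hcase ⊢ <;> grind

/-- If `f` is weakly dominant on every block and `g ⪯_b f`, then `g·x ⪯_b f`
for every `x ∈ 𝔖^b`. -/
theorem bruhatLE_comp_blockPerm (m n d : ℕ) (b : Fin (m + n) → Bool) (r : ℕ → ℕ)
    (hb : IsZeroOneSeq m n b) (hblock : BlockData (m + n) b d r)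
    (f : Fin (m + n) → ℤ) (hf : WeaklyDominant b d r f)
    (g : Fin (m + n) → ℤ) (hg : bruhatLE b g f) :
    ∀ x : Equiv.Perm (Fin (m + n)), BlockPerm (m + n) d r x → bruhatLE b (g ∘ ⇑x) f := by
  intro x hx
  have hblock' := hblock
  obtain ⟨h0, hd, -, -, -⟩ := hblock'
  have hbd : ∀ (a : ℤ) (k : ℕ), k ≤ d → sharp b (g ∘ x) a (r k) ≤ sharp b f a (r k) :=
    fun a k hk => (sharp_comp_boundary hblock hx g a hk).trans_le (hg.1 a _)
  refine ⟨fun a j => ?_, fun a => ?_⟩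
  · by_cases hj : j < m + n
    · obtain ⟨k, hk, hk1, hk2⟩ := exists_block h0 (d := d) (i := j) (by omega)
      rcases weight_compare hblock hf (g ∘ x) a hk ⟨j, hj⟩ hk1 hk2 with hw | hw
      · rw [sharp_split b (g ∘ x) a hk2.le, sharp_split b f a hk2.le]
        refine add_le_add (hbd a (k + 1) hk) (Finset.sum_le_sum fun i hi => ?_)
        rw [Finset.mem_filter] at hi
        exact hw i hi.2.1 hi.2.2
      · have hs := hbd a k hk.le
        rw [sharp_split b (g ∘ x) a hk1, sharp_split b f a hk1] at hs
        have hsum : ∑ i ∈ Finset.univ.filter (fun i : Fin (m + n) => r k ≤ i.val ∧ i.val < j),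
              weight b f a i ≤
            ∑ i ∈ Finset.univ.filter (fun i : Fin (m + n) => r k ≤ i.val ∧ i.val < j),
              weight b (g ∘ x) a i := by
          refine Finset.sum_le_sum fun i hi => ?_
          rw [Finset.mem_filter] at hi
          exact hw i hi.2.1 hi.2.2
        linarith
    · -- Beyond the last position both sums are empty.
      have hempty : ∀ h : Fin (m + n) → ℤ, sharp b h a j = 0 := by
        intro h
        rw [sharp_eq_sum_weight]
        refine Finset.sum_eq_zero fun i _ => if_neg ?_
        omega
      rw [hempty, hempty]
  · have h := sharp_comp_boundary hblock hx g a (Nat.zero_le d)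
    rw [h0] at h
    exact h.trans (hg.2 a)
end

section
/- The operators H_i on 𝕋^b satisfy the Iwahori–Hecke algebra relations: (H_i − q^{−1})∘(H_i + q) = 0 for every interior i; H_i ∘ H_j ∘ H_i = H_j ∘ H_i ∘ H_j whenever i and j are interior with |i − j| = 1; and H_i ∘ H_j = H_j ∘ H_i whenever i and j are interior with |i − j| > 1. -/
/-!
Each `H_i` acts on `M_f` through the two values of `f` at `i` and `i + 1` only, so every relation
can be checked on a family of basis vectors that vary in at most four values: two for the quadratic
relation, three for the braid relation, four (in two independent pairs) for the commutation.
Multiplying these values by the sign `(-1)^{b_i}` turns the case distinction defining `H_i` into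
the comparison of the two values in a linear order. This reduces the theorem to the three identities
`quadratic_of_step`, `braid_of_step` and `comm_of_step` in an arbitrary vector space, which are
verified for each relative order of the values.
-/

open Finset

noncomputable section

abbrev Tsp (N : ℕ) : Type := (Fin N → ℤ) →₀ RatFunc ℚ

def qq : RatFunc ℚ := RatFunc.X

def Interior (N : ℕ) (b : Fin N → Bool) (i : ℕ) : Prop :=
  ∃ (h1 : i < N) (h2 : i + 1 < N), b ⟨i, h1⟩ = b ⟨i + 1, h2⟩

def HM {N : ℕ} (b : Fin N → Bool) (i : ℕ) (f : Fin N → ℤ) : Tsp N :=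
  if h : i + 1 < N then
    let i0 : Fin N := ⟨i, Nat.lt_of_succ_lt h⟩
    let i1 : Fin N := ⟨i + 1, h⟩
    if f i0 = f i1 then qq⁻¹ • Finsupp.single f 1
    else if sgn b i0 * f i0 < sgn b i0 * f i1 then
      Finsupp.single (f ∘ ⇑(Equiv.swap i0 i1)) 1
    else
      Finsupp.single (f ∘ ⇑(Equiv.swap i0 i1)) 1 - (qq - qq⁻¹) • Finsupp.single f 1
  else Finsupp.single f 1

def HopN {N : ℕ} (b : Fin N → Bool) (i : ℕ) : Module.End (RatFunc ℚ) (Tsp N) :=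
  Finsupp.lsum (RatFunc ℚ) fun f => LinearMap.toSpanSingleton (RatFunc ℚ) (Tsp N) (HM b i f)

def swapPerm (N i : ℕ) : Equiv.Perm (Fin N) :=
  if h : i + 1 < N then Equiv.swap ⟨i, Nat.lt_of_succ_lt h⟩ ⟨i + 1, h⟩ else 1

def wordProd (N : ℕ) (l : List ℕ) : Equiv.Perm (Fin N) := (l.map (swapPerm N)).prod

def Hword {N : ℕ} (b : Fin N → Bool) (l : List ℕ) : Module.End (RatFunc ℚ) (Tsp N) :=
  ((l.map (HopN b)).reverse).prod

def blen {N : ℕ} (b : Fin N → Bool) (w : Equiv.Perm (Fin N)) : ℕ :=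
  sInf {k | ∃ l : List ℕ, (∀ i ∈ l, Interior N b i) ∧ wordProd N l = w ∧ l.length = k}

def IsReducedWord {N : ℕ} (b : Fin N → Bool) (w : Equiv.Perm (Fin N)) (l : List ℕ) : Prop :=
  (∀ i ∈ l, Interior N b i) ∧ wordProd N l = w ∧ l.length = blen b w

open scoped Classical in
def Hw {N : ℕ} (b : Fin N → Bool) (w : Equiv.Perm (Fin N)) : Module.End (RatFunc ℚ) (Tsp N) :=
  if h : ∃ l : List ℕ, IsReducedWord b w l then Hword b h.choose else 0

def IsW0 (N : ℕ) (d : ℕ) (r : ℕ → ℕ) (w0 : Equiv.Perm (Fin N)) : Prop :=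
  ∀ k < d, ∀ i : Fin N, r k ≤ i.val → i.val < r (k + 1) →
    ((w0 i).val) = r k + r (k + 1) - 1 - i.val

def Dominant {N : ℕ} (b : Fin N → Bool) (d : ℕ) (r : ℕ → ℕ) (f : Fin N → ℤ) : Prop :=
  ∀ k < d, ∀ i j : Fin N, r k ≤ i.val → i.val < j.val → j.val < r (k + 1) →
    sgn b i * f j < sgn b i * f i

def Antidominant {N : ℕ} (b : Fin N → Bool) (d : ℕ) (r : ℕ → ℕ) (f : Fin N → ℤ) : Prop :=
  ∀ k < d, ∀ i j : Fin N, r k ≤ i.val → i.val < j.val → j.val < r (k + 1) →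
    sgn b i * f i ≤ sgn b i * f j

def StrictAntidominant {N : ℕ} (b : Fin N → Bool) (d : ℕ) (r : ℕ → ℕ) (f : Fin N → ℤ) : Prop :=
  ∀ k < d, ∀ i j : Fin N, r k ≤ i.val → i.val < j.val → j.val < r (k + 1) →
    sgn b i * f i < sgn b i * f j

open scoped Classical in
def H0 {N : ℕ} (b : Fin N → Bool) (d : ℕ) (r : ℕ → ℕ) (w0 : Equiv.Perm (Fin N)) :
    Module.End (RatFunc ℚ) (Tsp N) :=
  ∑ w ∈ Finset.univ.filter (fun x : Equiv.Perm (Fin N) => BlockPerm N d r x),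
    ((-qq) ^ ((blen b w : ℤ) - (blen b w0 : ℤ))) • Hw b w

def Kel {N : ℕ} (b : Fin N → Bool) (d : ℕ) (r : ℕ → ℕ) (w0 : Equiv.Perm (Fin N))
    (f : Fin N → ℤ) : Tsp N :=
  H0 b d r w0 (Finsupp.single (f ∘ ⇑w0) 1)

def qint (k : ℕ) : RatFunc ℚ := (qq ^ (k : ℤ) - qq ^ (-(k : ℤ))) / (qq - qq⁻¹)

def qfact : ℕ → RatFunc ℚ
  | 0 => 1
  | k + 1 => qfact k * qint (k + 1)

def bform {N : ℕ} (u v : Tsp N) : RatFunc ℚ := u.sum fun f c => c * v f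

def sigmaMap {N : ℕ} (bar : RatFunc ℚ →+* RatFunc ℚ) (u : Tsp N) : Tsp N :=
  u.sum fun f c => Finsupp.single (-f) (bar c)

def HactFun {N : ℕ} (b : Fin N → Bool) (i : ℕ) (u : (Fin N → ℤ) → RatFunc ℚ) :
    (Fin N → ℤ) → RatFunc ℚ := fun h =>
  if hlt : i + 1 < N then
    let i0 : Fin N := ⟨i, Nat.lt_of_succ_lt hlt⟩
    let i1 : Fin N := ⟨i + 1, hlt⟩
    if h i0 = h i1 then qq⁻¹ * u h
    else if sgn b i0 * h i0 < sgn b i0 * h i1 then u (h ∘ ⇑(Equiv.swap i0 i1))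
    else u (h ∘ ⇑(Equiv.swap i0 i1)) - (qq - qq⁻¹) * u h
  else u h

section Abstract

variable {K V α : Type*} [Field K] [AddCommGroup V] [Module K V] [LinearOrder α]

/-- The rule for a Hecke generator on a basis vector `v` whose two relevant values are `x`, `y`;
`v'` is the basis vector obtained by exchanging them. -/
def step (q : K) (x y : α) (v v' : V) : V :=
  if x = y then q⁻¹ • v else if x < y then v' else v' - (q - q⁻¹) • v

theorem step_self (q : K) (x : α) (v v' : V) : step q x x v v' = q⁻¹ • v := by simp [step]

theorem step_lt (q : K) {x y : α} (h : x < y) (v v' : V) : step q x y v v' = v' := by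
  simp [step, h, h.ne]

theorem step_gt (q : K) {x y : α} (h : y < x) (v v' : V) :
    step q x y v v' = v' - (q - q⁻¹) • v := by
  simp [step, h.not_gt, h.ne']

theorem quadratic_of_step {q : K} (hq : q ≠ 0) (A : V →ₗ[K] V) (F : α → α → V)
    (hA : ∀ x y, A (F x y) = step q x y (F x y) (F y x)) (x y : α) :
    A (A (F x y) + q • F x y) - q⁻¹ • (A (F x y) + q • F x y) = 0 := by
  rcases lt_trichotomy x y with h | rfl | h <;>
    simp only [step_self, step_lt, step_gt, map_add, map_sub, map_smul, *] <;>
    match_scalars <;> field_simp <;> ring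

theorem braid_of_step {q : K} (hq : q ≠ 0) (A B : V →ₗ[K] V) (F : α → α → α → V)
    (hA : ∀ x y z, A (F x y z) = step q x y (F x y z) (F y x z))
    (hB : ∀ x y z, B (F x y z) = step q y z (F x y z) (F x z y)) (x y z : α) :
    A (B (A (F x y z))) = B (A (B (F x y z))) := by
  rcases lt_trichotomy x y with h | h | h <;> rcases lt_trichotomy y z with h' | h' | h' <;>
    rcases lt_trichotomy x z with h'' | h'' | h'' <;>
    first
    | (exfalso; order)
    | (subst_vars
       simp only [step_self, step_lt, step_gt, map_sub, map_smul, *]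
       try (match_scalars <;> field_simp <;> ring))

theorem comm_of_step {β : Type*} [LinearOrder β] (q : K) (A B : V →ₗ[K] V) (F : α → α → β → β → V)
    (hA : ∀ x y z w, A (F x y z w) = step q x y (F x y z w) (F y x z w))
    (hB : ∀ x y z w, B (F x y z w) = step q z w (F x y z w) (F x y w z)) (x y : α) (z w : β) :
    A (B (F x y z w)) = B (A (F x y z w)) := by
  rcases lt_trichotomy x y with h | rfl | h <;> rcases lt_trichotomy z w with h' | rfl | h' <;>
    simp only [step_self, step_lt, step_gt, map_sub, map_smul, *] <;>
    try module

end Abstract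

theorem qq_ne_zero : qq ≠ 0 := RatFunc.X_ne_zero

theorem sgn_mul_self {N : ℕ} (b : Fin N → Bool) (i : Fin N) : sgn b i * sgn b i = 1 := by
  unfold sgn; split_ifs <;> rfl

theorem sgn_mul_sgn_mul {N : ℕ} (b : Fin N → Bool) (i : Fin N) (x : ℤ) :
    sgn b i * (sgn b i * x) = x := by
  rw [← mul_assoc, sgn_mul_self, one_mul]

/-- `H_i` on basis vectors in the form of `step`. The values of `g` at `i` and `i + 1` are written
as the sign times `x` and `y`, and `g'` is any expression for `g` with these values exchanged. -/
theorem hopN_single {N : ℕ} (b : Fin N → Bool) (i : ℕ) (h0 : i < N) (h1 : i + 1 < N)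
    (g g' : Fin N → ℤ) (x y : ℤ)
    (hx : g ⟨i, h0⟩ = sgn b ⟨i, h0⟩ * x) (hy : g ⟨i + 1, h1⟩ = sgn b ⟨i, h0⟩ * y)
    (hx' : g' ⟨i + 1, h1⟩ = sgn b ⟨i, h0⟩ * x) (hy' : g' ⟨i, h0⟩ = sgn b ⟨i, h0⟩ * y)
    (hg : ∀ k, k ≠ ⟨i, h0⟩ → k ≠ ⟨i + 1, h1⟩ → g' k = g k) :
    HopN b i (Finsupp.single g 1) =
      step qq x y (Finsupp.single g (1 : RatFunc ℚ)) (Finsupp.single g' 1) := by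
  have hswap : g ∘ ⇑(Equiv.swap (⟨i, h0⟩ : Fin N) ⟨i + 1, h1⟩) = g' := by
    funext k
    by_cases hk : k = ⟨i, h0⟩
    · subst hk; simp [hy, hy']
    by_cases hk' : k = ⟨i + 1, h1⟩
    · subst hk'; simp [hx, hx']
    simp [Equiv.swap_apply_of_ne_of_ne hk hk', hg k hk hk']
  have hs : sgn b ⟨i, h0⟩ ≠ 0 := fun h => by simpa [h] using sgn_mul_self b ⟨i, h0⟩
  simp [HopN, HM, h1, hx, hy, hswap, sgn_mul_sgn_mul, hs, step]

theorem braid_adjacent {N : ℕ} (b : Fin N → Bool) (i : ℕ) (hi : Interior N b i)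
    (hi' : Interior N b (i + 1)) :
    HopN b i * HopN b (i + 1) * HopN b i = HopN b (i + 1) * HopN b i * HopN b (i + 1) := by
  obtain ⟨h0, h1, hb⟩ := hi
  obtain ⟨_, h2, _⟩ := hi'
  refine Finsupp.lhom_ext' fun f => LinearMap.ext_ring ?_
  have hs : sgn b ⟨i + 1, h1⟩ = sgn b ⟨i, h0⟩ := by simp [sgn, hb]
  let c := sgn b ⟨i, h0⟩
  let G : ℤ → ℤ → ℤ → Fin N → ℤ := fun x y z k =>
    if k.val = i then c * x else if k.val = i + 1 then c * y
      else if k.val = i + 1 + 1 then c * z else f k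
  have hf : f = G (c * f ⟨i, h0⟩) (c * f ⟨i + 1, h1⟩) (c * f ⟨i + 1 + 1, h2⟩) := by
    funext ⟨k, hk⟩
    simp only [G, c, sgn_mul_sgn_mul]
    split_ifs <;> subst_vars <;> rfl
  have key := braid_of_step qq_ne_zero (HopN b i) (HopN b (i + 1))
    (fun x y z => (Finsupp.single (G x y z) 1 : Tsp N))
    (fun x y z => hopN_single b i h0 h1 _ _ x y (by simp [G, c]) (by simp [G, c])
      (by simp [G, c]) (by simp [G, c]) (fun k hk hk' => by
        rw [Ne, Fin.ext_iff] at hk hk'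
        simp only [G, hk, hk', if_false]))
    (fun x y z => hopN_single b (i + 1) h1 h2 _ _ y z (by simp [G, c, hs])
      (by simp [G, c, hs, add_assoc]) (by simp [G, c, hs, add_assoc]) (by simp [G, c, hs])
      (fun k hk hk' => by
        rw [Ne, Fin.ext_iff] at hk hk'
        simp only [G, hk, hk', if_false]))
    (c * f ⟨i, h0⟩) (c * f ⟨i + 1, h1⟩) (c * f ⟨i + 1 + 1, h2⟩)
  simp only [← hf] at key
  exact key

theorem comm_distant {N : ℕ} (b : Fin N → Bool) (i j : ℕ) (hi : Interior N b i)
    (hj : Interior N b j) (hij : i + 1 < j) :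
    HopN b i * HopN b j = HopN b j * HopN b i := by
  obtain ⟨h0, h1, -⟩ := hi
  obtain ⟨h2, h3, -⟩ := hj
  refine Finsupp.lhom_ext' fun f => LinearMap.ext_ring ?_
  let c := sgn b ⟨i, h0⟩
  let d := sgn b ⟨j, h2⟩
  let G : ℤ → ℤ → ℤ → ℤ → Fin N → ℤ := fun x y z w k =>
    if k.val = i then c * x else if k.val = i + 1 then c * y
      else if k.val = j then d * z else if k.val = j + 1 then d * w else f k
  have hf : f = G (c * f ⟨i, h0⟩) (c * f ⟨i + 1, h1⟩) (d * f ⟨j, h2⟩) (d * f ⟨j + 1, h3⟩) := by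
    funext ⟨k, hk⟩
    simp only [G, c, d, sgn_mul_sgn_mul]
    split_ifs <;> subst_vars <;> rfl
  have e1 : j ≠ i := by omega
  have e2 : j ≠ i + 1 := by omega
  have e3 : j + 1 ≠ i := by omega
  have key := comm_of_step qq (HopN b i) (HopN b j)
    (fun x y z w => (Finsupp.single (G x y z w) 1 : Tsp N))
    (fun x y z w => hopN_single b i h0 h1 _ _ x y (by simp [G, c]) (by simp [G, c])
      (by simp [G, c]) (by simp [G, c]) (fun k hk hk' => by
        rw [Ne, Fin.ext_iff] at hk hk'
        simp only [G, hk, hk', if_false]))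
    (fun x y z w => hopN_single b j h2 h3 _ _ z w (by simp [G, d, e1, e2])
      (by simp [G, d, e1, e3]) (by simp [G, d, e1, e3]) (by simp [G, d, e1, e2])
      (fun k hk hk' => by
        rw [Ne, Fin.ext_iff] at hk hk'
        simp only [G, hk, hk', if_false]))
    (c * f ⟨i, h0⟩) (c * f ⟨i + 1, h1⟩) (d * f ⟨j, h2⟩) (d * f ⟨j + 1, h3⟩)
  simp only [← hf] at key
  exact key

theorem quadratic_rel {N : ℕ} (b : Fin N → Bool) (i : ℕ) (hi : Interior N b i) :
    (HopN b i - qq⁻¹ • (1 : Module.End (RatFunc ℚ) (Tsp N))) *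
      (HopN b i + qq • (1 : Module.End (RatFunc ℚ) (Tsp N))) = 0 := by
  obtain ⟨h0, h1, -⟩ := hi
  refine Finsupp.lhom_ext' fun f => LinearMap.ext_ring ?_
  let c := sgn b ⟨i, h0⟩
  let G : ℤ → ℤ → Fin N → ℤ := fun x y k =>
    if k.val = i then c * x else if k.val = i + 1 then c * y else f k
  have hf : f = G (c * f ⟨i, h0⟩) (c * f ⟨i + 1, h1⟩) := by
    funext ⟨k, hk⟩
    simp only [G, c, sgn_mul_sgn_mul]
    split_ifs <;> subst_vars <;> rfl
  have key := quadratic_of_step qq_ne_zero (HopN b i)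
    (fun x y => (Finsupp.single (G x y) 1 : Tsp N))
    (fun x y => hopN_single b i h0 h1 _ _ x y (by simp [G, c]) (by simp [G, c])
      (by simp [G, c]) (by simp [G, c]) (fun k hk hk' => by
        rw [Ne, Fin.ext_iff] at hk hk'
        simp only [G, hk, hk', if_false]))
    (c * f ⟨i, h0⟩) (c * f ⟨i + 1, h1⟩)
  simp only [← hf] at key
  exact key

/-- The operators `H_i` on `𝕋^b` satisfy the Iwahori–Hecke algebra relations. -/
theorem hecke_relations (m n : ℕ) (b : Fin (m + n) → Bool) (hb : IsZeroOneSeq m n b) :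
    (∀ i : ℕ, Interior (m + n) b i →
      (HopN b i - qq⁻¹ • (1 : Module.End (RatFunc ℚ) (Tsp (m + n)))) *
        (HopN b i + qq • (1 : Module.End (RatFunc ℚ) (Tsp (m + n)))) = 0) ∧
    (∀ i j : ℕ, Interior (m + n) b i → Interior (m + n) b j → (i = j + 1 ∨ j = i + 1) →
      HopN b i * HopN b j * HopN b i = HopN b j * HopN b i * HopN b j) ∧
    (∀ i j : ℕ, Interior (m + n) b i → Interior (m + n) b j → (i + 1 < j ∨ j + 1 < i) →
      HopN b i * HopN b j = HopN b j * HopN b i) := by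
  refine ⟨fun i hi => quadratic_rel b i hi, ?_, ?_⟩
  · rintro i j hi hj (rfl | rfl)
    · exact (braid_adjacent b j hj hi).symm
    · exact braid_adjacent b i hi hj
  · rintro i j hi hj (h | h)
    · exact comm_distant b i j hi hj h
    · exact (comm_distant b j i hj hi h).symm

end
end

section
/- Let u : ℤ^{m+n} → ℚ(q) be a function whose support {g : u(g) ≠ 0} is contained in a finite union ⋃_{j=1}^N {g ∈ ℤ^{m+n} : g ⪯_b f_j} for some f_1,…,f_N ∈ ℤ^{m+n}, and let i be an interior index. Then the support of u·H_i is also contained in a finite union of sets of the form {g ∈ ℤ^{m+n} : g ⪯_b f'}. In other words, the B-completion of the Fock space 𝕋^b is stable under the right action of each H_i (and hence is a right ℋ^b-module). -/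
/-!
The only values of `u` entering `(u·H_i)(h)` are `u h` and `u (h·s_i)`, so the support of `u·H_i`
lies in `supp u ∪ (supp u)·s_i`. It therefore suffices that for every `f` there is an `f'` with
`g ⪯ f'` and `g·s_i ⪯ f'` for all `g ⪯ f` (`exists_bruhat_upper`).

Take for `f'` the larger of `f` and `f·s_i`. Since `b_i = b_{i+1}`, swapping the entries `i` and
`i+1` changes `♯(f, a, j)` only at the cut `j = i+1` between them. At that cut
`♯(g·s_i, a, i+1) ≤ ♯(f', a, i+1)` follows from the inequalities for `g ⪯ f` at the cuts `i` and
`i+2`, where `f` and `f'` agree: this is the lifting property of the Bruhat order.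
-/

open Finset

noncomputable section

theorem sharp_eq_head_add {N : ℕ} (b : Fin N → Bool) (f : Fin N → ℤ) (a : ℤ) (j : ℕ) (hj : j < N) :
    sharp b f a j = (if f ⟨j, hj⟩ ≤ a then sgn b ⟨j, hj⟩ else 0) + sharp b f a (j + 1) := by
  unfold sharp
  have hsplit : ∀ k : Fin N, (if j ≤ k.val ∧ f k ≤ a then sgn b k else 0) =
      (if k = ⟨j, hj⟩ then (if f ⟨j, hj⟩ ≤ a then sgn b ⟨j, hj⟩ else 0) else 0) +
        (if j + 1 ≤ k.val ∧ f k ≤ a then sgn b k else 0) := by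
    intro k
    by_cases hk : k = ⟨j, hj⟩
    · subst hk
      simp
    · have hne : k.val ≠ j := fun h => hk (Fin.ext h)
      have hiff : j ≤ k.val ↔ j + 1 ≤ k.val := by omega
      simp [hk, hiff]
  rw [Finset.sum_filter, Finset.sum_filter, Finset.sum_congr rfl (fun k _ => hsplit k),
    Finset.sum_add_distrib]
  simp

theorem sharp_swap_of_ge {N : ℕ} (b : Fin N → Bool) (f : Fin N → ℤ) (a : ℤ) (i : ℕ)
    (h1 : i < N) (h2 : i + 1 < N) (j : ℕ) (hj : i + 2 ≤ j) :
    sharp b (f ∘ ⇑(Equiv.swap (⟨i, h1⟩ : Fin N) ⟨i + 1, h2⟩)) a j = sharp b f a j := by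
  unfold sharp
  refine Finset.sum_congr (Finset.filter_congr fun k _ => and_congr_right fun hk => ?_)
    fun _ _ => rfl
  have e1 : k ≠ ⟨i, h1⟩ := fun h => by simp [h] at hk; omega
  have e2 : k ≠ ⟨i + 1, h2⟩ := fun h => by simp [h] at hk; omega
  rw [Function.comp_apply, Equiv.swap_apply_of_ne_of_ne e1 e2]

theorem sharp_swap_of_le {N : ℕ} (b : Fin N → Bool) (f : Fin N → ℤ) (a : ℤ) (i : ℕ)
    (h1 : i < N) (h2 : i + 1 < N) (hb : b ⟨i, h1⟩ = b ⟨i + 1, h2⟩) (j : ℕ) (hj : j ≤ i) :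
    sharp b (f ∘ ⇑(Equiv.swap (⟨i, h1⟩ : Fin N) ⟨i + 1, h2⟩)) a j = sharp b f a j := by
  induction hj using Nat.decreasingInduction with
  | self =>
    rw [sharp_eq_head_add b _ a i h1, sharp_eq_head_add b _ a (i + 1) h2,
      sharp_swap_of_ge b f a i h1 h2 _ le_rfl, sharp_eq_head_add b f a i h1,
      sharp_eq_head_add b f a (i + 1) h2]
    have hs : sgn b ⟨i, h1⟩ = sgn b ⟨i + 1, h2⟩ := by simp [sgn, hb]
    simp only [Function.comp_apply, Equiv.swap_apply_left, Equiv.swap_apply_right, hs]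
    ring
  | of_succ k hk ih =>
    have hkN : k < N := by omega
    have e1 : (⟨k, hkN⟩ : Fin N) ≠ ⟨i, h1⟩ := fun h => by simp at h; omega
    have e2 : (⟨k, hkN⟩ : Fin N) ≠ ⟨i + 1, h2⟩ := fun h => by simp at h; omega
    rw [sharp_eq_head_add b _ a k hkN, sharp_eq_head_add b f a k hkN, ih, Function.comp_apply,
      Equiv.swap_apply_of_ne_of_ne e1 e2]

/-- At the cut `i + 1` the swap replaces the contribution of the entry `i + 1` by that of the
entry `i`. -/
theorem sharp_swap_mid {N : ℕ} (b : Fin N → Bool) (f : Fin N → ℤ) (a : ℤ) (i : ℕ)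
    (h1 : i < N) (h2 : i + 1 < N) :
    sharp b (f ∘ ⇑(Equiv.swap (⟨i, h1⟩ : Fin N) ⟨i + 1, h2⟩)) a (i + 1) =
      (if f ⟨i, h1⟩ ≤ a then sgn b ⟨i + 1, h2⟩ else 0) + sharp b f a (i + 1 + 1) := by
  rw [sharp_eq_head_add b _ a (i + 1) h2, sharp_swap_of_ge b f a i h1 h2 _ le_rfl]
  simp

theorem bruhatLE.trans {N : ℕ} {b : Fin N → Bool} {f g h : Fin N → ℤ}
    (hfg : bruhatLE b f g) (hgh : bruhatLE b g h) : bruhatLE b f h :=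
  ⟨fun a j => (hfg.1 a j).trans (hgh.1 a j), fun a => (hfg.2 a).trans (hgh.2 a)⟩

/-- Comparing a swapped function in the Bruhat order only requires a look at the cut between the
two swapped entries. -/
theorem bruhatLE_swap_of_mid {N : ℕ} (b : Fin N → Bool) (f g : Fin N → ℤ) (i : ℕ)
    (h1 : i < N) (h2 : i + 1 < N) (hb : b ⟨i, h1⟩ = b ⟨i + 1, h2⟩) (hgf : bruhatLE b g f)
    (hmid : ∀ a, (if g ⟨i, h1⟩ ≤ a then sgn b ⟨i + 1, h2⟩ else 0) + sharp b g a (i + 1 + 1) ≤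
      sharp b f a (i + 1)) :
    bruhatLE b (g ∘ ⇑(Equiv.swap (⟨i, h1⟩ : Fin N) ⟨i + 1, h2⟩)) f := by
  refine ⟨fun a j => ?_, fun a => ?_⟩
  · rcases lt_trichotomy j (i + 1) with hj | rfl | hj
    · rw [sharp_swap_of_le b g a i h1 h2 hb j (by omega)]
      exact hgf.1 a j
    · rw [sharp_swap_mid]
      exact hmid a
    · rw [sharp_swap_of_ge b g a i h1 h2 j (by omega)]
      exact hgf.1 a j
  · rw [sharp_swap_of_le b g a i h1 h2 hb 0 (Nat.zero_le _)]
    exact hgf.2 a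

/-- The lifting property: if `f` is maximal in `{f, f·s_i}`, then the lower set of `f` is stable
under `s_i`. -/
theorem bruhatLE_swap_of_maximal {N : ℕ} (b : Fin N → Bool) (f g : Fin N → ℤ) (i : ℕ)
    (h1 : i < N) (h2 : i + 1 < N) (hb : b ⟨i, h1⟩ = b ⟨i + 1, h2⟩)
    (hf : sgn b ⟨i + 1, h2⟩ * f ⟨i + 1, h2⟩ ≤ sgn b ⟨i + 1, h2⟩ * f ⟨i, h1⟩)
    (hgf : bruhatLE b g f) :
    bruhatLE b (g ∘ ⇑(Equiv.swap (⟨i, h1⟩ : Fin N) ⟨i + 1, h2⟩)) f := by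
  refine bruhatLE_swap_of_mid b f g i h1 h2 hb hgf fun a => ?_
  have k0 := hgf.1 a i
  have k2 := hgf.1 a (i + 1 + 1)
  rw [sharp_eq_head_add b g a i h1, sharp_eq_head_add b g a (i + 1) h2,
    sharp_eq_head_add b f a i h1, sharp_eq_head_add b f a (i + 1) h2] at k0
  rw [sharp_eq_head_add b f a (i + 1) h2]
  have hs : sgn b ⟨i, h1⟩ = sgn b ⟨i + 1, h2⟩ := by simp [sgn, hb]
  rw [hs] at k0
  have hc : sgn b ⟨i + 1, h2⟩ = 1 ∨ sgn b ⟨i + 1, h2⟩ = -1 := by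
    unfold sgn
    split_ifs <;> simp
  rcases hc with hc | hc <;> rw [hc] at k0 hf ⊢ <;> split_ifs at k0 ⊢ <;> omega

/-- `f` is below `f·s_i` when the entries `i`, `i + 1` of `f` are in the non-maximal order. -/
theorem bruhatLE_swap_self {N : ℕ} (b : Fin N → Bool) (f : Fin N → ℤ) (i : ℕ)
    (h1 : i < N) (h2 : i + 1 < N) (hb : b ⟨i, h1⟩ = b ⟨i + 1, h2⟩)
    (hf : sgn b ⟨i + 1, h2⟩ * f ⟨i, h1⟩ ≤ sgn b ⟨i + 1, h2⟩ * f ⟨i + 1, h2⟩) :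
    bruhatLE b f (f ∘ ⇑(Equiv.swap (⟨i, h1⟩ : Fin N) ⟨i + 1, h2⟩)) := by
  refine ⟨fun a j => ?_, fun a => ?_⟩
  · rcases lt_trichotomy j (i + 1) with hj | rfl | hj
    · rw [sharp_swap_of_le b f a i h1 h2 hb j (by omega)]
    · rw [sharp_swap_mid, sharp_eq_head_add b f a (i + 1) h2]
      have hc : sgn b ⟨i + 1, h2⟩ = 1 ∨ sgn b ⟨i + 1, h2⟩ = -1 := by
        unfold sgn
        split_ifs <;> simp
      rcases hc with hc | hc <;> rw [hc] at hf ⊢ <;> split_ifs <;> omega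
    · rw [sharp_swap_of_ge b f a i h1 h2 j (by omega)]
  · rw [sharp_swap_of_le b f a i h1 h2 hb 0 (Nat.zero_le _)]

theorem exists_bruhat_upper {N : ℕ} (b : Fin N → Bool) (f : Fin N → ℤ) (i : ℕ)
    (h1 : i < N) (h2 : i + 1 < N) (hb : b ⟨i, h1⟩ = b ⟨i + 1, h2⟩) :
    ∃ f' : Fin N → ℤ, ∀ g, bruhatLE b g f →
      bruhatLE b g f' ∧ bruhatLE b (g ∘ ⇑(Equiv.swap (⟨i, h1⟩ : Fin N) ⟨i + 1, h2⟩)) f' := by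
  rcases le_total (sgn b ⟨i + 1, h2⟩ * f ⟨i + 1, h2⟩) (sgn b ⟨i + 1, h2⟩ * f ⟨i, h1⟩) with hf | hf
  · exact ⟨f, fun g hg => ⟨hg, bruhatLE_swap_of_maximal b f g i h1 h2 hb hf hg⟩⟩
  · refine ⟨f ∘ ⇑(Equiv.swap (⟨i, h1⟩ : Fin N) ⟨i + 1, h2⟩), fun g hg => ?_⟩
    have hg' := hg.trans (bruhatLE_swap_self b f i h1 h2 hb hf)
    exact ⟨hg', bruhatLE_swap_of_maximal b _ g i h1 h2 hb (by simpa using hf) hg'⟩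

theorem support_HactFun {N : ℕ} (b : Fin N → Bool) (i : ℕ) (u : (Fin N → ℤ) → RatFunc ℚ)
    (h1 : i < N) (h2 : i + 1 < N) (h : Fin N → ℤ) (hh : HactFun b i u h ≠ 0) :
    u h ≠ 0 ∨ u (h ∘ ⇑(Equiv.swap (⟨i, h1⟩ : Fin N) ⟨i + 1, h2⟩)) ≠ 0 := by
  by_contra! hcon
  apply hh
  simp [HactFun, h2, hcon.1, hcon.2]

/-- The B-completion of the Fock space is stable under the right action of each `H_i`:
if the support of `u` is contained in a finite union of Bruhat lower sets, then so is
the support of `u·H_i`. -/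
theorem Bcompletion_H_stable (m n : ℕ) (b : Fin (m + n) → Bool) (hb : IsZeroOneSeq m n b)
    (u : (Fin (m + n) → ℤ) → RatFunc ℚ) (Nf : ℕ) (fj : Fin Nf → (Fin (m + n) → ℤ))
    (hsupp : {g : Fin (m + n) → ℤ | u g ≠ 0} ⊆ ⋃ j : Fin Nf, {g | bruhatLE b g (fj j)})
    (i : ℕ) (hi : Interior (m + n) b i) :
    ∃ (M : ℕ) (f' : Fin M → (Fin (m + n) → ℤ)),
      {h : Fin (m + n) → ℤ | HactFun b i u h ≠ 0} ⊆ ⋃ j : Fin M, {g | bruhatLE b g (f' j)} := by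
  obtain ⟨h1, h2, hbi⟩ := hi
  choose f' hf' using fun j => exists_bruhat_upper b (fj j) i h1 h2 hbi
  refine ⟨Nf, f', fun h hh => ?_⟩
  rcases support_HactFun b i u h1 h2 h hh with hu | hu
  · obtain ⟨j, hj⟩ := Set.mem_iUnion.1 (hsupp hu)
    exact Set.mem_iUnion.2 ⟨j, (hf' j _ hj).1⟩
  · obtain ⟨j, hj⟩ := Set.mem_iUnion.1 (hsupp hu)
    refine Set.mem_iUnion.2 ⟨j, ?_⟩
    -- `h = (h·s_i)·s_i`, and `h·s_i` lies below `fj j`.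
    have hle := (hf' j _ hj).2
    rwa [Function.comp_assoc, ← Equiv.coe_trans, Equiv.swap_swap, Equiv.coe_refl,
      Function.comp_id] at hle

end
end

section
/- For every u ∈ 𝕋^b and every interior index i, σ(u H_i) = σ(u) H_i + (q − q^{−1})·σ(u); equivalently, σ ∘ (right multiplication by H_i) equals (right multiplication by H_i^{−1} = H_i + (q − q^{−1})) ∘ σ. -/
/-!
All maps involved are additive in `u`, and `σ` is semilinear for `bar`, so it suffices to compare
both sides on a basis vector `M_f` (`sigmaMap_HM`). There negation commutes with `f ↦ f ∘ s_i`
and exchanges the two strict cases `c f(i) < c f(i+1)` and `c f(i) > c f(i+1)`, which is exactly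
compensated by the summand `(q - q⁻¹) σ(M_f)`; in the case `f(i) = f(i+1)` the claim is
`q = q⁻¹ + (q - q⁻¹)`.
-/

open Finset

noncomputable section

theorem sigmaMap_single {N : ℕ} (bar : RatFunc ℚ →+* RatFunc ℚ) (f : Fin N → ℤ) (c : RatFunc ℚ) :
    sigmaMap bar (Finsupp.single f c) = Finsupp.single (-f) (bar c) := by
  simp [sigmaMap]

theorem sigmaMap_add {N : ℕ} (bar : RatFunc ℚ →+* RatFunc ℚ) (u v : Tsp N) :
    sigmaMap bar (u + v) = sigmaMap bar u + sigmaMap bar v :=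
  Finsupp.sum_add_index' (by simp) (by simp)

theorem sigmaMap_smul {N : ℕ} (bar : RatFunc ℚ →+* RatFunc ℚ) (c : RatFunc ℚ) (u : Tsp N) :
    sigmaMap bar (c • u) = bar c • sigmaMap bar u := by
  induction u using Finsupp.induction_linear with
  | zero => simp [sigmaMap]
  | add u v hu hv => rw [smul_add, sigmaMap_add, sigmaMap_add, smul_add, hu, hv]
  | single f d =>
    rw [Finsupp.smul_single, sigmaMap_single, sigmaMap_single, Finsupp.smul_single, smul_eq_mul,
      smul_eq_mul, map_mul]

theorem sigmaMap_sub {N : ℕ} (bar : RatFunc ℚ →+* RatFunc ℚ) (u v : Tsp N) :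
    sigmaMap bar (u - v) = sigmaMap bar u - sigmaMap bar v := by
  rw [eq_sub_iff_add_eq, ← sigmaMap_add, sub_add_cancel]

theorem HopN_single {N : ℕ} (b : Fin N → Bool) (i : ℕ) (f : Fin N → ℤ) (c : RatFunc ℚ) :
    HopN b i (Finsupp.single f c) = c • HM b i f := by
  simp [HopN]

/-- The claim on the basis vector `M_f`. The bound on `i` excludes the junk branch of `HM`. -/
theorem sigmaMap_HM {N : ℕ} (b : Fin N → Bool) (bar : RatFunc ℚ →+* RatFunc ℚ)
    (hbar : bar qq = qq⁻¹) (i : ℕ) (hi : i + 1 < N) (f : Fin N → ℤ) :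
    sigmaMap bar (HM b i f) = HM b i (-f) + (qq - qq⁻¹) • Finsupp.single (-f) 1 := by
  have neg_comp : ∀ e : Equiv.Perm (Fin N), (-f) ∘ e = -(f ∘ e) := fun _ => rfl
  simp only [HM, dif_pos hi, Pi.neg_apply, neg_inj, mul_neg, neg_lt_neg_iff, neg_comp]
  set i0 : Fin N := ⟨i, Nat.lt_of_succ_lt hi⟩
  set i1 : Fin N := ⟨i + 1, hi⟩
  by_cases heq : f i0 = f i1
  · rw [if_pos heq, if_pos heq, sigmaMap_smul, sigmaMap_single, map_inv₀, hbar, inv_inv, map_one,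
      ← add_smul, add_sub_cancel]
  · have hne : sgn b i0 * f i0 ≠ sgn b i0 * f i1 := by
      intro h
      refine heq (mul_left_cancel₀ ?_ h)
      unfold sgn
      split_ifs <;> decide
    rw [if_neg heq, if_neg heq]
    rcases lt_or_gt_of_ne hne with h | h
    · rw [if_pos h, if_neg h.not_gt, sigmaMap_single, map_one, sub_add_cancel]
    · rw [if_neg h.not_gt, if_pos h, sigmaMap_sub, sigmaMap_smul, sigmaMap_single,
        sigmaMap_single, map_sub, map_inv₀, hbar, inv_inv, map_one, sub_eq_add_neg, ← neg_smul,
        neg_sub]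

/-- `σ(u H_i) = σ(u) H_i + (q − q⁻¹)·σ(u)` for every `u ∈ 𝕋^b` and every interior `i`,
where `σ` is built from the bar involution `q ↦ q⁻¹` of `ℚ(q)`. -/
theorem sigma_HopN (m n : ℕ) (b : Fin (m + n) → Bool) (hb : IsZeroOneSeq m n b)
    (bar : RatFunc ℚ →+* RatFunc ℚ) (hbarX : bar RatFunc.X = (RatFunc.X)⁻¹)
    (hbarC : ∀ c : ℚ, bar (algebraMap ℚ (RatFunc ℚ) c) = algebraMap ℚ (RatFunc ℚ) c)
    (i : ℕ) (hi : Interior (m + n) b i) (u : Tsp (m + n)) :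
    sigmaMap bar (HopN b i u) =
      HopN b i (sigmaMap bar u) + (qq - qq⁻¹) • sigmaMap bar u := by
  have hi' : i + 1 < m + n := hi.choose_spec.choose
  induction u using Finsupp.induction_linear with
  | zero => simp [sigmaMap]
  | add u v hu hv =>
    rw [map_add, sigmaMap_add, sigmaMap_add, map_add, smul_add, hu, hv]
    abel
  | single f c =>
    rw [HopN_single, sigmaMap_smul, sigmaMap_HM b bar hbarX i hi' f, sigmaMap_single, HopN_single,
      smul_add, smul_comm, Finsupp.smul_single_one]

end
end

section
/- For every b-dominant f ∈ ℤ^{b,+}, the element K_f := M_{f·w_0} H_0 has the explicit expansion K_f = Σ_{x ∈ 𝔖^b} (−q)^{−ℓ(x)} M_{f·x}. -/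
/-!
Put `g = f · w₀`, which is strictly increasing on each block after multiplication by the sign
`(-1)^b`. The length function on `𝔖^b` is the number of inversions (`blen_eq_invCount`), so along a
reduced word of `w` every partial product `u` satisfies `u i < u (i + 1)` for the next letter `i`;
hence the next operator `H_i` always acts in its first case, and `M_g H_w = M_{g · w}`
(`Hword_apply`). Therefore `K_f = Σ_w (-q)^{ℓ(w) - ℓ(w₀)} M_{f · w₀ w}`. Substituting `x = w₀ w` and
using `ℓ(w₀ w) = ℓ(w₀) - ℓ(w)` (`invCount_w0_mul`) gives the expansion.

The block decomposition is encoded by a monotone function `B` sending a position to the index of its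
block; `𝔖^b` is then the set of permutations `x` with `B (x i) = B i` for all `i`.
-/

open Finset

noncomputable section

/-! ### Inversions and adjacent transpositions -/

/-- The number of inversions of a permutation of `Fin N`. -/
def invCount {N : ℕ} (w : Equiv.Perm (Fin N)) : ℕ :=
  (univ.filter fun p : Fin N × Fin N => p.1 < p.2 ∧ w p.2 < w p.1).card

lemma swapPerm_eq {N i : ℕ} (h : i + 1 < N) :
    swapPerm N i = Equiv.swap ⟨i, Nat.lt_of_succ_lt h⟩ ⟨i + 1, h⟩ := by
  simp [swapPerm, h]

lemma swap_lt_swap {N i : ℕ} (h : i + 1 < N) (a c : Fin N) (hac : a < c)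
    (hne : ¬ (a.val = i ∧ c.val = i + 1)) : swapPerm N i a < swapPerm N i c := by
  rw [swapPerm_eq h]
  simp only [Equiv.swap_apply_def, Fin.lt_def, Fin.ext_iff] at *
  split_ifs <;> simp_all <;> omega

lemma swapPerm_mul_self (N i : ℕ) : swapPerm N i * swapPerm N i = 1 := by
  unfold swapPerm; split_ifs <;> simp

lemma swapPerm_swapPerm {N : ℕ} (i : ℕ) (a : Fin N) : swapPerm N i (swapPerm N i a) = a := by
  rw [← Equiv.Perm.mul_apply, swapPerm_mul_self]; rfl

lemma invCount_mul_swap {N i : ℕ} (h : i + 1 < N) (u : Equiv.Perm (Fin N))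
    (hu : u ⟨i, Nat.lt_of_succ_lt h⟩ < u ⟨i + 1, h⟩) :
    invCount (u * swapPerm N i) = invCount u + 1 := by
  set i0 : Fin N := ⟨i, Nat.lt_of_succ_lt h⟩ with hi0
  set i1 : Fin N := ⟨i + 1, h⟩ with hi1
  have hs0 : swapPerm N i i0 = i1 := by rw [swapPerm_eq h]; simp [hi0, hi1]
  have hs1 : swapPerm N i i1 = i0 := by rw [swapPerm_eq h]; simp [hi0, hi1]
  have hmem : (i0, i1) ∈ univ.filter fun p : Fin N × Fin N =>
      p.1 < p.2 ∧ (u * swapPerm N i) p.2 < (u * swapPerm N i) p.1 := by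
    simp only [mem_filter, mem_univ, true_and]
    simp only [Equiv.Perm.mul_apply, hs0, hs1]
    exact ⟨by simp [hi0, hi1, Fin.lt_def], hu⟩
  unfold invCount
  rw [← card_erase_add_one hmem]
  congr 1
  symm
  refine card_bij' (fun p _ => (swapPerm N i p.1, swapPerm N i p.2))
    (fun p _ => (swapPerm N i p.1, swapPerm N i p.2)) ?_ ?_ ?_ ?_
  · rintro ⟨a, c⟩ hp
    simp only [mem_filter, mem_univ, true_and] at hp
    have hne : ¬ (a.val = i ∧ c.val = i + 1) := by
      rintro ⟨ha, hc⟩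
      have ha : a = i0 := Fin.ext ha
      have hc : c = i1 := Fin.ext hc
      subst ha hc
      exact absurd hu (not_lt.2 hp.2.le)
    simp only [mem_erase, mem_filter, mem_univ, true_and]
    simp only [Equiv.Perm.mul_apply, swapPerm_swapPerm]
    refine ⟨fun he => ?_, swap_lt_swap h a c hp.1 hne, hp.2⟩
    rw [Prod.mk.injEq] at he
    have ha : a = i1 := by rw [← swapPerm_swapPerm i a, he.1, hs0]
    have hc : c = i0 := by rw [← swapPerm_swapPerm i c, he.2, hs1]
    have := hp.1
    rw [ha, hc] at this
    simp [hi0, hi1, Fin.lt_def] at this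
  · rintro ⟨a, c⟩ hp
    simp only [mem_erase, mem_filter, mem_univ, true_and] at hp
    simp only [Equiv.Perm.mul_apply] at hp
    have hne : ¬ (a.val = i ∧ c.val = i + 1) := by
      rintro ⟨ha, hc⟩
      exact hp.1 (Prod.ext (Fin.ext ha) (Fin.ext hc))
    simp only [mem_filter, mem_univ, true_and]
    exact ⟨swap_lt_swap h a c hp.2.1 hne, hp.2.2⟩
  · rintro ⟨a, c⟩ _
    simp [swapPerm_swapPerm]
  · rintro ⟨a, c⟩ _
    simp [swapPerm_swapPerm]

lemma invCount_mul_swap' {N i : ℕ} (h : i + 1 < N) (u : Equiv.Perm (Fin N))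
    (hu : u ⟨i + 1, h⟩ < u ⟨i, Nat.lt_of_succ_lt h⟩) :
    invCount (u * swapPerm N i) + 1 = invCount u := by
  have := invCount_mul_swap h (u * swapPerm N i) (by
    simpa [Equiv.Perm.mul_apply, swapPerm_eq h] using hu)
  rw [mul_assoc, swapPerm_mul_self, mul_one] at this
  exact this.symm

lemma invCount_one (N : ℕ) : invCount (1 : Equiv.Perm (Fin N)) = 0 := by
  unfold invCount
  rw [card_eq_zero, filter_eq_empty_iff]
  rintro ⟨a, c⟩ _ ⟨h1, h2⟩
  exact absurd h1 (not_lt.2 h2.le)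

lemma wordProd_append (N : ℕ) (l : List ℕ) (i : ℕ) :
    wordProd N (l ++ [i]) = wordProd N l * swapPerm N i := by
  simp [wordProd]

lemma invCount_wordProd_le {N : ℕ} (l : List ℕ) : invCount (wordProd N l) ≤ l.length := by
  induction l using List.reverseRecOn with
  | nil => simp [wordProd, invCount_one]
  | append_singleton l i ih =>
    rw [wordProd_append, List.length_append, List.length_singleton]
    by_cases h : i + 1 < N
    · rcases lt_trichotomy (wordProd N l ⟨i, Nat.lt_of_succ_lt h⟩) (wordProd N l ⟨i + 1, h⟩)
        with hlt | heq | hgt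
      · rw [invCount_mul_swap h _ hlt]; omega
      · simp at heq
      · have := invCount_mul_swap' h _ hgt; omega
    · simp only [swapPerm, h, dite_false, mul_one]; omega

/-- Contrapositively: a permutation without adjacent descents is the identity. -/
lemma exists_descent {N : ℕ} (w : Equiv.Perm (Fin N)) (hw : w ≠ 1) :
    ∃ (i : ℕ) (h : i + 1 < N), w ⟨i + 1, h⟩ < w ⟨i, Nat.lt_of_succ_lt h⟩ := by
  by_contra! hno
  apply hw
  rcases N with _ | N
  · exact Subsingleton.elim _ _
  have hmono : StrictMono w := by
    rw [Fin.strictMono_iff_lt_succ]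
    intro i
    refine lt_of_le_of_ne (hno i.val (by omega)) ?_
    intro he
    have := w.injective he
    simp [Fin.ext_iff] at this
  refine Equiv.coe_fn_injective ((hmono.range_inj strictMono_id).1 ?_)
  simp [w.surjective.range_eq]

/-! ### Length in the block group -/

lemma swapPerm_preserves {N : ℕ} {b : Fin N → Bool} {B : Fin N → ℕ}
    (hI : ∀ i, Interior N b i ↔ ∃ h : i + 1 < N, B ⟨i, Nat.lt_of_succ_lt h⟩ = B ⟨i + 1, h⟩)
    {i : ℕ} (hi : Interior N b i) (a : Fin N) : B (swapPerm N i a) = B a := by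
  obtain ⟨h, hB⟩ := (hI i).1 hi
  rw [swapPerm_eq h, Equiv.swap_apply_def]
  split_ifs with h1 h2
  · rw [h1, hB]
  · rw [h2, hB]
  · rfl

lemma wordProd_preserves {N : ℕ} {b : Fin N → Bool} {B : Fin N → ℕ}
    (hI : ∀ i, Interior N b i ↔ ∃ h : i + 1 < N, B ⟨i, Nat.lt_of_succ_lt h⟩ = B ⟨i + 1, h⟩)
    (l : List ℕ) (hl : ∀ i ∈ l, Interior N b i) (a : Fin N) : B (wordProd N l a) = B a := by
  induction l using List.reverseRecOn generalizing a with
  | nil => simp [wordProd]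
  | append_singleton l i ih =>
    rw [wordProd_append, Equiv.Perm.mul_apply, ih (fun j hj => hl j (by simp [hj])),
      swapPerm_preserves hI (hl i (by simp))]

/-- Sorting by adjacent descents: since `B` is monotone, a descent of a block-preserving permutation
always lies inside a block, so each sorting step uses an interior transposition. -/
lemma exists_word {N : ℕ} {b : Fin N → Bool} {B : Fin N → ℕ} (hB : Monotone B)
    (hI : ∀ i, Interior N b i ↔ ∃ h : i + 1 < N, B ⟨i, Nat.lt_of_succ_lt h⟩ = B ⟨i + 1, h⟩)
    (k : ℕ) : ∀ w : Equiv.Perm (Fin N), (∀ a, B (w a) = B a) → invCount w = k →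
      ∃ l : List ℕ, (∀ i ∈ l, Interior N b i) ∧ wordProd N l = w ∧ l.length = k := by
  induction k with
  | zero =>
    intro w _ hk
    refine ⟨[], by simp, ?_, rfl⟩
    by_contra hne
    obtain ⟨i, h, hlt⟩ := exists_descent w (fun h => hne (by simp [wordProd, h]))
    have := invCount_mul_swap' h w hlt
    omega
  | succ k ih =>
    intro w hw hk
    obtain ⟨i, h, hlt⟩ := exists_descent w (fun h => by rw [h, invCount_one] at hk; omega)
    have hi : Interior N b i := by
      refine (hI i).2 ⟨h, le_antisymm (hB (by simp [Fin.le_def])) ?_⟩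
      rw [← hw ⟨i + 1, h⟩, ← hw ⟨i, _⟩]
      exact hB hlt.le
    have hinv := invCount_mul_swap' h w hlt
    obtain ⟨l, hl, hlw, hlen⟩ := ih (w * swapPerm N i)
      (fun a => by rw [Equiv.Perm.mul_apply, hw, swapPerm_preserves hI hi]) (by omega)
    refine ⟨l ++ [i], ?_, ?_, by simp [hlen]⟩
    · intro j hj
      rcases List.mem_append.1 hj with hj | hj
      · exact hl j hj
      · rw [List.mem_singleton.1 hj]; exact hi
    · rw [wordProd_append, hlw, mul_assoc, swapPerm_mul_self, mul_one]

lemma blen_eq_invCount {N : ℕ} {b : Fin N → Bool} {B : Fin N → ℕ} (hB : Monotone B)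
    (hI : ∀ i, Interior N b i ↔ ∃ h : i + 1 < N, B ⟨i, Nat.lt_of_succ_lt h⟩ = B ⟨i + 1, h⟩)
    (w : Equiv.Perm (Fin N)) (hw : ∀ a, B (w a) = B a) : blen b w = invCount w := by
  have hex := exists_word hB hI (invCount w) w hw rfl
  refine le_antisymm (Nat.sInf_le hex) (le_csInf ⟨_, hex⟩ ?_)
  rintro k ⟨l, _, rfl, rfl⟩
  exact invCount_wordProd_le l

/-! ### The action of `H_w` on antidominant elements -/

lemma HopN_single_s14 {N : ℕ} (b : Fin N → Bool) (i : ℕ) (h : i + 1 < N) (g : Fin N → ℤ)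
    (hg : sgn b ⟨i, Nat.lt_of_succ_lt h⟩ * g ⟨i, Nat.lt_of_succ_lt h⟩ <
      sgn b ⟨i, Nat.lt_of_succ_lt h⟩ * g ⟨i + 1, h⟩) :
    HopN b i (Finsupp.single g 1) = Finsupp.single (g ∘ ⇑(swapPerm N i)) 1 := by
  have hne : g ⟨i, Nat.lt_of_succ_lt h⟩ ≠ g ⟨i + 1, h⟩ := fun he => by
    rw [he] at hg; exact lt_irrefl _ hg
  simp [HopN, HM, h, hne, hg, swapPerm_eq h]

/-- If `g` is strictly antidominant, then `M_g H_w = M_{g · w}`, computed along any word of `w`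
whose length is the number of inversions: all the prefixes of such a word are reduced as well, so
each letter exchanges two values of `g` that are in increasing order. -/
lemma Hword_apply {N : ℕ} {b : Fin N → Bool} {B : Fin N → ℕ}
    (hI : ∀ i, Interior N b i ↔ ∃ h : i + 1 < N, B ⟨i, Nat.lt_of_succ_lt h⟩ = B ⟨i + 1, h⟩)
    (hs : ∀ i j, B i = B j → sgn b i = sgn b j) (g : Fin N → ℤ)
    (hg : ∀ i j, i < j → B i = B j → sgn b i * g i < sgn b i * g j)
    (l : List ℕ) (hl : ∀ i ∈ l, Interior N b i) (hinv : invCount (wordProd N l) = l.length) :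
    Hword b l (Finsupp.single g 1) = Finsupp.single (g ∘ ⇑(wordProd N l)) 1 := by
  induction l using List.reverseRecOn with
  | nil => simp [Hword, wordProd]
  | append_singleton l i ih =>
    have hl' : ∀ j ∈ l, Interior N b j := fun j hj => hl j (by simp [hj])
    obtain ⟨h, hBi⟩ := (hI i).1 (hl i (by simp))
    rw [wordProd_append, List.length_append, List.length_singleton] at hinv
    have hle := invCount_wordProd_le (N := N) l
    have hlt : wordProd N l ⟨i, Nat.lt_of_succ_lt h⟩ < wordProd N l ⟨i + 1, h⟩ := by
      by_contra hn
      have hgt : wordProd N l ⟨i + 1, h⟩ < wordProd N l ⟨i, Nat.lt_of_succ_lt h⟩ :=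
        lt_of_le_of_ne (not_lt.1 hn) (by simp)
      have := invCount_mul_swap' h _ hgt
      omega
    have hup := invCount_mul_swap h _ hlt
    have hH : Hword b (l ++ [i]) = HopN b i * Hword b l := by simp [Hword]
    have hp := wordProd_preserves hI l hl'
    rw [hH, Module.End.mul_apply, ih hl' (by omega), HopN_single_s14 b i h, wordProd_append]
    · rfl
    · have := hg _ _ hlt (by rw [hp, hp, hBi])
      rwa [hs _ _ (hp ⟨i, Nat.lt_of_succ_lt h⟩)] at this

lemma Hw_apply {N : ℕ} {b : Fin N → Bool} {B : Fin N → ℕ} (hB : Monotone B)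
    (hI : ∀ i, Interior N b i ↔ ∃ h : i + 1 < N, B ⟨i, Nat.lt_of_succ_lt h⟩ = B ⟨i + 1, h⟩)
    (hs : ∀ i j, B i = B j → sgn b i = sgn b j) (g : Fin N → ℤ)
    (hg : ∀ i j, i < j → B i = B j → sgn b i * g i < sgn b i * g j)
    (w : Equiv.Perm (Fin N)) (hw : ∀ a, B (w a) = B a) :
    Hw b w (Finsupp.single g 1) = Finsupp.single (g ∘ ⇑w) 1 := by
  have hlen := blen_eq_invCount hB hI w hw
  have hex : ∃ l : List ℕ, IsReducedWord b w l := by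
    obtain ⟨l, h1, h2, h3⟩ := exists_word hB hI _ w hw rfl
    exact ⟨l, h1, h2, h3.trans hlen.symm⟩
  obtain ⟨h1, h2, h3⟩ := hex.choose_spec
  have := Hword_apply hI hs g hg hex.choose h1 (by rw [h2, h3, hlen])
  rw [h2] at this
  rw [Hw, dif_pos hex, this]

/-! ### Multiplication by the longest element -/

/-- `ℓ(w₀ w) + ℓ(w) = ℓ(w₀)`: both sides count the pairs of positions in a common block, since
`w₀ w` inverts such a pair exactly when `w` does not. -/
lemma invCount_w0_mul {N : ℕ} {B : Fin N → ℕ} (hB : Monotone B) (w0 w : Equiv.Perm (Fin N))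
    (h0 : ∀ a, B (w0 a) = B a) (hw0 : ∀ i j, i < j → B i = B j → w0 j < w0 i)
    (hw : ∀ a, B (w a) = B a) : invCount (w0 * w) + invCount w = invCount w0 := by
  -- An inversion of a block-preserving permutation lies in a single block.
  have hsame : ∀ x : Equiv.Perm (Fin N), (∀ a, B (x a) = B a) → ∀ i j, i < j → x j < x i →
      B i = B j := fun x hx i j hij hx' =>
    le_antisymm (hB hij.le) (by rw [← hx i, ← hx j]; exact hB hx'.le)
  have hw0w : ∀ a, B ((w0 * w) a) = B a := fun a => by rw [Equiv.Perm.mul_apply, h0, hw]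
  unfold invCount
  rw [← card_union_of_disjoint]
  · congr 1
    ext ⟨i, j⟩
    simp only [mem_union, mem_filter, mem_univ, true_and]
    constructor
    · rintro (⟨hij, hx⟩ | ⟨hij, hx⟩)
      · exact ⟨hij, hw0 _ _ hij (hsame _ hw0w _ _ hij hx)⟩
      · exact ⟨hij, hw0 _ _ hij (hsame _ hw _ _ hij hx)⟩
    · rintro ⟨hij, hx⟩
      have hb := hsame _ h0 _ _ hij hx
      rcases lt_or_ge (w j) (w i) with h | h
      · exact Or.inr ⟨hij, h⟩
      · have h' : w i < w j := lt_of_le_of_ne h (by simpa using hij.ne)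
        exact Or.inl ⟨hij, hw0 _ _ h' (by rw [hw, hw, hb])⟩
  · rw [disjoint_filter]
    rintro ⟨i, j⟩ _ ⟨hij, hx⟩ ⟨_, hx'⟩
    have := hw0 _ _ hx' (by rw [hw, hw, hsame _ hw _ _ hij hx'])
    exact absurd hx (not_lt.2 this.le)

/-! ### The block index function -/

/-- The block index function `B` of a block decomposition: position `i` lies in the block
`[r (B i), r (B i + 1))`. Because `b` changes value at every block boundary, `i` is interior exactly
when `i` and `i + 1` have the same block index. -/
lemma exists_blockIndex {N d : ℕ} {b : Fin N → Bool} {r : ℕ → ℕ} (h : BlockData N b d r) :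
    ∃ B : Fin N → ℕ, Monotone B ∧
      (∀ i, B i < d ∧ r (B i) ≤ i.val ∧ i.val < r (B i + 1)) ∧
      (∀ i k, k < d → r k ≤ i.val → i.val < r (k + 1) → B i = k) ∧
      (∀ i j, B i = B j → sgn b i = sgn b j) ∧
      (∀ i, Interior N b i ↔ ∃ h : i + 1 < N, B ⟨i, Nat.lt_of_succ_lt h⟩ = B ⟨i + 1, h⟩) := by
  obtain ⟨hr0, hrd, hlt, hconst, hne⟩ := h
  have hmono : ∀ k l, k ≤ l → l ≤ d → r k ≤ r l := by
    intro k l hkl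
    induction l, hkl using Nat.le_induction with
    | base => intro _; exact le_rfl
    | succ l _ ih => intro hl; exact (ih (by omega)).trans (hlt l (by omega)).le
  have hex : ∀ i : Fin N, ∃ k, k < d ∧ r k ≤ i.val ∧ i.val < r (k + 1) := by
    intro i
    have hP : ∃ k, i.val < r k := ⟨d, by rw [hrd]; exact i.2⟩
    have h1 := Nat.find_spec hP
    have h2 : Nat.find hP ≤ d := Nat.find_min' hP (by rw [hrd]; exact i.2)
    have h3 : Nat.find hP ≠ 0 := fun h0 => by rw [h0, hr0] at h1; omega
    obtain ⟨k, hk⟩ := Nat.exists_eq_succ_of_ne_zero h3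
    have h4 : ¬ i.val < r k := Nat.find_min hP (by omega)
    rw [hk] at h1
    exact ⟨k, by omega, by omega, h1⟩
  choose B hBd hBl hBu using hex
  have hB : Monotone B := by
    intro i j hij
    by_contra hn
    have := hmono (B j + 1) (B i) (by omega) (hBd i).le
    have h1 := hBl i
    have h2 := hBu j
    have : i.val ≤ j.val := hij
    omega
  have huniq : ∀ i k, k < d → r k ≤ i.val → i.val < r (k + 1) → B i = k := by
    intro i k hk h1 h2
    have h3 := hBl i
    have h4 := hBu i
    have h5 := hBd i
    rcases lt_trichotomy (B i) k with hlt' | heq | hgt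
    · have := hmono (B i + 1) k (by omega) hk.le
      omega
    · exact heq
    · have := hmono (k + 1) (B i) (by omega) h5.le
      omega
  have hbB : ∀ i j, B i = B j → b i = b j := fun i j hij =>
    hconst (B i) (hBd i) i j (hBl i) (hBu i) (by rw [hij]; exact hBl j) (by rw [hij]; exact hBu j)
  refine ⟨B, hB, fun i => ⟨hBd i, hBl i, hBu i⟩, huniq, fun i j hij => ?_, fun i => ⟨?_, ?_⟩⟩
  · unfold sgn; rw [hbB i j hij]
  · rintro ⟨h1, h2, hbi⟩
    refine ⟨h2, ?_⟩
    set k := B ⟨i, h1⟩ with hk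
    have hl : r k ≤ i := hBl ⟨i, h1⟩
    have hu : i < r (k + 1) := hBu ⟨i, h1⟩
    have hd : k < d := hBd ⟨i, h1⟩
    rcases Nat.lt_or_ge (i + 1) (r (k + 1)) with hlt' | hge
    · exact (huniq ⟨i + 1, h2⟩ k hd (by simp only; omega) hlt').symm
    · exfalso
      have he : r (k + 1) = i + 1 := by omega
      have hkd : k + 1 < d := by
        rcases Nat.lt_or_ge (k + 1) d with h' | h'
        · exact h'
        · have : k + 1 = d := by omega
          rw [this, hrd] at he
          omega
      refine hne (k + 1) (by omega) hkd (by omega) (by omega) ?_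
      simpa [he] using hbi
  · rintro ⟨h2, hBi⟩
    exact ⟨Nat.lt_of_succ_lt h2, h2, hbB _ _ hBi⟩

open scoped Classical in
/-- For `b`-dominant `f`, the element `K_f = M_{f·w_0} H_0` has the explicit expansion
`K_f = Σ_{x ∈ 𝔖^b} (−q)^{−ℓ(x)} M_{f·x}`. -/
theorem Kel_expansion (m n d : ℕ) (b : Fin (m + n) → Bool) (r : ℕ → ℕ)
    (w0 : Equiv.Perm (Fin (m + n))) (hb : IsZeroOneSeq m n b)
    (hblock : BlockData (m + n) b d r) (hw0 : IsW0 (m + n) d r w0)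
    (f : Fin (m + n) → ℤ) (hf : Dominant b d r f) :
    Kel b d r w0 f =
      ∑ x ∈ Finset.univ.filter (fun x : Equiv.Perm (Fin (m + n)) => BlockPerm (m + n) d r x),
        ((-qq) ^ (-(blen b x : ℤ))) • Finsupp.single (f ∘ ⇑x) (1 : RatFunc ℚ) := by
  obtain ⟨B, hB, hBk, huniq, hs, hI⟩ := exists_blockIndex hblock
  have hBP : ∀ x : Equiv.Perm (Fin (m + n)), BlockPerm (m + n) d r x ↔ ∀ a, B (x a) = B a := by
    intro x
    constructor
    · intro h a
      obtain ⟨h1, h2, h3⟩ := hBk a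
      obtain ⟨h4, h5⟩ := h (B a) h1 a h2 h3
      exact huniq _ _ h1 h4 h5
    · intro h k hk i h1 h2
      have hi := huniq i k hk h1 h2
      have := hBk (x i)
      rw [h i, hi] at this
      exact this.2
  have h0 : ∀ a, B (w0 a) = B a := by
    intro a
    obtain ⟨h1, h2, h3⟩ := hBk a
    have := hw0 (B a) h1 a h2 h3
    exact huniq _ _ h1 (by omega) (by omega)
  have hanti : ∀ i j, i < j → B i = B j → w0 j < w0 i := by
    intro i j hij hBij
    obtain ⟨h1, h2, h3⟩ := hBk i
    obtain ⟨_, h5, h6⟩ := hBk j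
    rw [← hBij] at h5 h6
    have e1 := hw0 (B i) h1 i h2 h3
    have e2 := hw0 (B i) h1 j h5 h6
    rw [Fin.lt_def] at hij ⊢
    omega
  have hg : ∀ i j, i < j → B i = B j →
      sgn b i * (f ∘ ⇑w0) i < sgn b i * (f ∘ ⇑w0) j := by
    intro i j hij hBij
    obtain ⟨h1, h2, _⟩ := hBk (w0 j)
    have h3 := (hBk (w0 i)).2.2
    rw [h0 i, hBij, ← h0 j] at h3
    have := hf _ h1 (w0 j) (w0 i) h2 (hanti i j hij hBij) h3
    rwa [hs (w0 j) i (by rw [h0, hBij])] at this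
  unfold Kel H0
  rw [LinearMap.sum_apply]
  refine sum_bij (fun w _ => w0 * w) ?_ ?_ ?_ ?_
  · intro w hw
    simp only [mem_filter, mem_univ, true_and, hBP] at hw ⊢
    exact fun a => by rw [Equiv.Perm.mul_apply, h0, hw]
  · intro x _ y _ hxy
    exact mul_left_cancel hxy
  · intro x hx
    simp only [mem_filter, mem_univ, true_and, hBP] at hx
    have hinv : ∀ a, B (w0⁻¹ a) = B a := fun a => by
      rw [← h0 (w0⁻¹ a), ← Equiv.Perm.mul_apply, mul_inv_cancel, Equiv.Perm.one_apply]
    refine ⟨w0⁻¹ * x, ?_, by simp⟩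
    simp only [mem_filter, mem_univ, true_and, hBP]
    exact fun a => by rw [Equiv.Perm.mul_apply, hinv, hx]
  · intro w hw
    simp only [mem_filter, mem_univ, true_and, hBP] at hw
    have hw' : ∀ a, B ((w0 * w) a) = B a := fun a => by rw [Equiv.Perm.mul_apply, h0, hw]
    rw [LinearMap.smul_apply, Hw_apply hB hI hs _ hg w hw, blen_eq_invCount hB hI w hw,
      blen_eq_invCount hB hI w0 h0, blen_eq_invCount hB hI _ hw',
      ← invCount_w0_mul hB w0 w h0 hanti hw]
    congr 2
    push_cast
    ring

end
end
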